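/- Let c = a(0,0,0,0,0,1/2,0) and define σ : G → G by σ(g) = c·ρ(g), where ρ(g) = j g j⁻¹. Then: (i) c commutes with every element of G; (ii) σ(σ(g)) = g for all g ∈ G; (iii) A·σ(g) = σ(ρ(A)·g) for all A, g ∈ G; and (iv) σ(a(x)) = a(−x₁, −x₂, x₃, x₄, −x₅, 1/2−x₆, x₇) for every x ∈ ℝ⁷. -/

import Mathlib

noncomputable section

open Matrix

/-- The upper-left 6×6 block `A₁(x)`. Coordinates: `x 0 = x₁`, ..., `x 6 = x₇`. -/
def A1 (x : Fin 7 → ℝ) : Matrix (Fin 6) (Fin 6) ℝ :=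
  !![1, -x 1, x 0, x 3, -(x 0 * x 1), x 5;
     0, 1, 0, -x 0, x 0, x 0 ^ 2 / 2;
     0, 0, 1, 0, -x 1, -x 3;
     0, 0, 0, 1, 0, 0;
     0, 0, 0, 0, 1, x 0;
     0, 0, 0, 0, 0, 1]

/-- The lower-right 6×6 block `A₂(x)`, obtained from `A₁(x)` by replacing
`x₂, x₄, x₆` with `x₃, x₅, x₇`. -/
def A2 (x : Fin 7 → ℝ) : Matrix (Fin 6) (Fin 6) ℝ :=
  !![1, -x 2, x 0, x 4, -(x 0 * x 2), x 6;
     0, 1, 0, -x 0, x 0, x 0 ^ 2 / 2;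
     0, 0, 1, 0, -x 2, -x 4;
     0, 0, 0, 1, 0, 0;
     0, 0, 0, 0, 1, x 0;
     0, 0, 0, 0, 0, 1]

/-- The block-diagonal 12×12 matrix `a(x) = diag(A₁(x), A₂(x))`. -/
def aMat (x : Fin 7 → ℝ) : Matrix (Fin 6 ⊕ Fin 6) (Fin 6 ⊕ Fin 6) ℝ :=
  Matrix.fromBlocks (A1 x) 0 0 (A2 x)

/-- The set `G = {a(x) : x ∈ ℝ⁷}` of matrices. -/
def GSet : Set (Matrix (Fin 6 ⊕ Fin 6) (Fin 6 ⊕ Fin 6) ℝ) :=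
  {A | ∃ x : Fin 7 → ℝ, A = aMat x}
/-- The block-diagonal matrix `j = diag(J₁, J₂)` with `J₁ = diag(1,−1,−1,1,1,−1)` and
`J₂ = diag(1,1,−1,−1,−1,1)`. -/
def jMat : Matrix (Fin 6 ⊕ Fin 6) (Fin 6 ⊕ Fin 6) ℝ :=
  Matrix.fromBlocks (Matrix.diagonal ![1, -1, -1, 1, 1, -1]) 0 0
    (Matrix.diagonal ![1, 1, -1, -1, -1, 1])
/-- `c = a(0,0,0,0,0,1/2,0)`. -/
def cMat : Matrix (Fin 6 ⊕ Fin 6) (Fin 6 ⊕ Fin 6) ℝ :=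
  aMat ![0, 0, 0, 0, 0, 1/2, 0]

/-- The automorphism `ρ(g) = j g j⁻¹`. -/
def rho (A : Matrix (Fin 6 ⊕ Fin 6) (Fin 6 ⊕ Fin 6) ℝ) :
    Matrix (Fin 6 ⊕ Fin 6) (Fin 6 ⊕ Fin 6) ℝ :=
  jMat * A * jMat⁻¹

/-- The involution `σ(g) = c · ρ(g)`. -/
def sigma (A : Matrix (Fin 6 ⊕ Fin 6) (Fin 6 ⊕ Fin 6) ℝ) :
    Matrix (Fin 6 ⊕ Fin 6) (Fin 6 ⊕ Fin 6) ℝ :=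
  cMat * rho A

/-! Both diagonal blocks of `a(x)` are `engelMatrix t u v w` for one 4-dimensional nilpotent
group, the Engel group, with the same `t = x₁`. Its centre is the `w`-line, and for nonzero
`τ, υ` the map `(t, u, v, w) ↦ (τt, υu, τυv, τ²υw)` is implemented by a diagonal matrix; the
blocks of `j` are the cases `(τ, υ) = (-1, -1)` and `(-1, 1)`. Hence `ρ` is an involution which
inverts the central element `c`, so `σ(σ(g)) = c ρ(c) g = g`, and
`A c ρ(g) = c A ρ(g) = c ρ(ρ(A) g)`.
-/

section TwistedTranslation

variable {G M : Type*} [Monoid G] [Monoid M] [MulDistribMulAction G M] {γ : G} {c : M}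

theorem involutive_const_mul_smul (hγ : γ * γ = 1) (hc : c * γ • c = 1) :
    Function.Involutive fun g : M ↦ c * γ • g := fun g ↦
  calc c * γ • (c * γ • g) = c * γ • c * (γ * γ) • g := by rw [smul_mul', mul_smul, mul_assoc]
    _ = g := by rw [hγ, hc, one_smul, one_mul]

theorem mul_const_mul_smul {a : M} (hγ : γ * γ = 1) (hca : Commute c a) (g : M) :
    a * (c * γ • g) = c * γ • (γ • a * g) :=
  calc a * (c * γ • g) = c * (a * γ • g) := hca.symm.left_comm _
    _ = c * γ • (γ • a * g) := by rw [smul_mul', smul_smul, hγ, one_smul]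

end TwistedTranslation

theorem fromBlocks_zero_zero_mul {m n R : Type*} [Fintype m] [Fintype n]
    [NonUnitalNonAssocSemiring R] (A A' : Matrix m m R) (D D' : Matrix n n R) :
    fromBlocks A 0 0 D * fromBlocks A' 0 0 D' = fromBlocks (A * A') 0 0 (D * D') := by
  simp only [fromBlocks_multiply, Matrix.mul_zero, Matrix.zero_mul, add_zero, zero_add]

section Dilation

variable {R : Type*} [CommRing R]

/-- The diagonal matrix implementing the dilation of the Engel group which scales its two
generating coordinates `t` and `u` by `τ` and `υ`. -/
def engelDilation (τ υ : R) : Matrix (Fin 6) (Fin 6) R :=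
  diagonal ![1, υ, τ, τ * υ, τ * υ, τ ^ 2 * υ]

theorem engelDilation_one_one : engelDilation (1 : R) 1 = 1 := by
  rw [engelDilation, ← diagonal_one]
  congr 1
  ext i
  fin_cases i <;> simp

theorem engelDilation_mul (τ υ τ' υ' : R) :
    engelDilation τ υ * engelDilation τ' υ' = engelDilation (τ * τ') (υ * υ') := by
  rw [engelDilation, engelDilation, diagonal_mul_diagonal, engelDilation]
  congr 1
  ext i
  fin_cases i <;> simp <;> ring

end Dilation

section Engel

variable {K : Type*} [Field K]

/-- The element with coordinates `(t, u, v, w)` of the Engel group (the 4-dimensional filiform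
nilpotent group), in the 6-dimensional representation given by the diagonal blocks of `aMat`. -/
def engelMatrix (t u v w : K) : Matrix (Fin 6) (Fin 6) K :=
  !![1, -u, t, v, -(t * u), w;
     0, 1, 0, -t, t, t ^ 2 / 2;
     0, 0, 1, 0, -u, -v;
     0, 0, 0, 1, 0, 0;
     0, 0, 0, 0, 1, t;
     0, 0, 0, 0, 0, 1]

theorem engelMatrix_zero : engelMatrix (0 : K) 0 0 0 = 1 := by
  ext i k
  fin_cases i <;> fin_cases k <;> simp [engelMatrix]

theorem engelMatrix_mul [NeZero (2 : K)] (t u v w t' u' v' w' : K) :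
    engelMatrix t u v w * engelMatrix t' u' v' w' =
      engelMatrix (t + t') (u + u') (v + v' + u * t')
        (w + w' - t * v' - t * u * t' - u * t' ^ 2 / 2) := by
  have half_sq_add : (t + t') ^ 2 / 2 = t ^ 2 / 2 + t * t' + t' ^ 2 / 2 := by
    field_simp
    ring
  ext i k
  fin_cases i <;> fin_cases k <;>
    simp [engelMatrix, mul_apply, Fin.sum_univ_succ, half_sq_add] <;> ring

theorem engelMatrix_mul_engelDilation (τ υ t u v w : K) :
    engelMatrix t u v w * engelDilation τ υ =
      engelDilation τ υ * engelMatrix (τ * t) (υ * u) (τ * υ * v) (τ ^ 2 * υ * w) := by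
  ext i k
  rw [engelDilation, mul_diagonal, diagonal_mul]
  fin_cases i <;> fin_cases k <;> simp [engelMatrix] <;> ring

end Engel

theorem aMat_eq_fromBlocks_engelMatrix (x : Fin 7 → ℝ) :
    aMat x = fromBlocks (engelMatrix (x 0) (x 1) (x 3) (x 5)) 0 0
      (engelMatrix (x 0) (x 2) (x 4) (x 6)) :=
  rfl

theorem jMat_eq_fromBlocks_engelDilation :
    jMat = fromBlocks (engelDilation (-1) (-1)) 0 0 (engelDilation (-1) 1) := by
  simp [jMat, engelDilation]

theorem jMat_mul_self : jMat * jMat = 1 := by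
  simp only [jMat_eq_fromBlocks_engelDilation, fromBlocks_zero_zero_mul, engelDilation_mul,
    neg_mul_neg, mul_one, engelDilation_one_one, fromBlocks_one]

theorem aMat_mul_jMat (x : Fin 7 → ℝ) :
    aMat x * jMat = jMat * aMat ![-x 0, -x 1, x 2, x 3, -x 4, -x 5, x 6] := by
  simp [aMat_eq_fromBlocks_engelMatrix, jMat_eq_fromBlocks_engelDilation,
    fromBlocks_zero_zero_mul, engelMatrix_mul_engelDilation]

/-- Conjugation by `jMat`, as an element of the group acting on matrices by conjugation; this makes
`rho` an instance of a `MulDistribMulAction`. -/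
def jConj : ConjAct (Matrix (Fin 6 ⊕ Fin 6) (Fin 6 ⊕ Fin 6) ℝ)ˣ :=
  ConjAct.toConjAct ⟨jMat, jMat, jMat_mul_self, jMat_mul_self⟩

theorem jConj_mul_self : jConj * jConj = 1 :=
  ConjAct.ofConjAct.injective (Units.ext jMat_mul_self)

theorem rho_eq_jConj_smul (A : Matrix (Fin 6 ⊕ Fin 6) (Fin 6 ⊕ Fin 6) ℝ) :
    rho A = jConj • A := by
  rw [rho, inv_eq_right_inv jMat_mul_self]
  rfl

theorem rho_aMat (x : Fin 7 → ℝ) :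
    rho (aMat x) = aMat ![-x 0, -x 1, x 2, x 3, -x 4, -x 5, x 6] := by
  rw [rho, inv_eq_right_inv jMat_mul_self, Matrix.mul_assoc, aMat_mul_jMat, ← Matrix.mul_assoc,
    jMat_mul_self, Matrix.one_mul]

theorem cMat_mul_aMat (x : Fin 7 → ℝ) :
    cMat * aMat x = aMat ![x 0, x 1, x 2, x 3, x 4, 1 / 2 + x 5, x 6] := by
  simp [cMat, aMat_eq_fromBlocks_engelMatrix, fromBlocks_zero_zero_mul, engelMatrix_mul]

theorem aMat_mul_cMat (x : Fin 7 → ℝ) :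
    aMat x * cMat = aMat ![x 0, x 1, x 2, x 3, x 4, 1 / 2 + x 5, x 6] := by
  simp [cMat, aMat_eq_fromBlocks_engelMatrix, fromBlocks_zero_zero_mul, engelMatrix_mul, add_comm]

theorem commute_cMat_of_mem_GSet {A : Matrix (Fin 6 ⊕ Fin 6) (Fin 6 ⊕ Fin 6) ℝ}
    (hA : A ∈ GSet) : Commute cMat A := by
  obtain ⟨x, rfl⟩ := hA
  exact (cMat_mul_aMat x).trans (aMat_mul_cMat x).symm

theorem cMat_mul_rho_cMat : cMat * rho cMat = 1 := by
  nth_rw 2 [cMat]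
  rw [rho_aMat, cMat_mul_aMat]
  simp [aMat_eq_fromBlocks_engelMatrix, engelMatrix_zero]

theorem sigma_eq_cMat_mul_jConj_smul : sigma = fun A ↦ cMat * jConj • A :=
  funext fun A ↦ by rw [sigma, rho_eq_jConj_smul]

theorem sigma_involutive : Function.Involutive sigma := by
  rw [sigma_eq_cMat_mul_jConj_smul]
  exact involutive_const_mul_smul jConj_mul_self (rho_eq_jConj_smul cMat ▸ cMat_mul_rho_cMat)

theorem mul_sigma_of_mem_GSet {A : Matrix (Fin 6 ⊕ Fin 6) (Fin 6 ⊕ Fin 6) ℝ} (hA : A ∈ GSet)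
    (g : Matrix (Fin 6 ⊕ Fin 6) (Fin 6 ⊕ Fin 6) ℝ) : A * sigma g = sigma (rho A * g) := by
  simp only [sigma_eq_cMat_mul_jConj_smul, rho_eq_jConj_smul]
  exact mul_const_mul_smul jConj_mul_self (commute_cMat_of_mem_GSet hA) g

theorem sigma_aMat (x : Fin 7 → ℝ) :
    sigma (aMat x) = aMat ![-x 0, -x 1, x 2, x 3, -x 4, 1 / 2 - x 5, x 6] := by
  rw [sigma, rho_aMat, cMat_mul_aMat]
  rfl

theorem stmt_6_general :
    (∀ A ∈ GSet, Commute cMat A) ∧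
    Function.Involutive sigma ∧
    (∀ A ∈ GSet, ∀ g, A * sigma g = sigma (rho A * g)) ∧
    (∀ x : Fin 7 → ℝ,
      sigma (aMat x) = aMat ![-x 0, -x 1, x 2, x 3, -x 4, 1 / 2 - x 5, x 6]) :=
  ⟨fun _ ↦ commute_cMat_of_mem_GSet, sigma_involutive, fun _ ↦ mul_sigma_of_mem_GSet, sigma_aMat⟩

/-- (i) `c` commutes with every element of `G`; (ii) `σ ∘ σ = id` on `G`;
(iii) `A · σ(g) = σ(ρ(A) · g)` for all `A, g ∈ G`; and
(iv) `σ(a(x)) = a(−x₁, −x₂, x₃, x₄, −x₅, 1/2 − x₆, x₇)` for every `x ∈ ℝ⁷`. -/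
theorem stmt_6 :
    (∀ A ∈ GSet, cMat * A = A * cMat) ∧
    (∀ g ∈ GSet, sigma (sigma g) = g) ∧
    (∀ A ∈ GSet, ∀ g ∈ GSet, A * sigma g = sigma (rho A * g)) ∧
    (∀ x : Fin 7 → ℝ,
      sigma (aMat x) = aMat ![-x 0, -x 1, x 2, x 3, -x 4, 1/2 - x 5, x 6]) :=
  let ⟨commute_c, sigma_sigma, mul_sigma, sigma_a⟩ := stmt_6_general
  ⟨commute_c, fun g _ ↦ sigma_sigma g, fun A hA g _ ↦ mul_sigma A hA g, sigma_a⟩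

end
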